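/- For every polynomial Q with complex coefficients, the series Σ_{n=0}^∞ |Q(n)| |j_n(z)|² converges for every z ∈ ℂ, and the convergence is uniform on every compact subset of ℂ. -/

import Mathlib

open MeasureTheory

/-- The spherical Bessel function of the first kind of order `n`, defined for `z ∈ ℂ` by
`j_n(z) = z^n Σ_{k=0}^∞ (-z²/2)^k / (k! (2n+2k+1)!!)`. -/
noncomputable def sphBessel (n : ℕ) (z : ℂ) : ℂ :=
  z ^ n * ∑' k : ℕ,
    (-z ^ 2 / 2) ^ k / ((k.factorial : ℂ) * ((2 * n + 2 * k + 1).doubleFactorial : ℂ))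

/-!
Since `n! ≤ (2n+2k+1)‼`, the power series is dominated by that of the exponential, giving
`|j_n(z)| ≤ Rⁿ / n! · exp (R² / 2)` for `|z| ≤ R`. The factor `1 / n!²` beats any weight of at most
exponential growth in `n`, in particular a polynomial one, and the Weierstrass M-test applies.
-/

open Asymptotics Filter
open scoped Nat

theorem factorial_le_doubleFactorial {n m : ℕ} (h : 2 * n ≤ m + 1) : n ! ≤ m‼ := by
  induction n generalizing m with
  | zero => exact Nat.doubleFactorial_pos m
  | succ n ih =>
    match m with
    | 0 => omega
    | 1 =>
      obtain rfl : n = 0 := by omega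
      rfl
    | m + 2 =>
      rw [Nat.factorial_succ, Nat.doubleFactorial_add_two]
      exact Nat.mul_le_mul (by omega) (ih (by omega))

theorem norm_sphBessel_series_term_le (n k : ℕ) (z : ℂ) :
    ‖(-z ^ 2 / 2) ^ k / ((k ! : ℂ) * ((2 * n + 2 * k + 1)‼ : ℂ))‖ ≤
      (‖z‖ ^ 2 / 2) ^ k / k ! / n ! := by
  have hfact : (n ! : ℝ) ≤ (2 * n + 2 * k + 1)‼ :=
    mod_cast factorial_le_doubleFactorial (by omega)
  simp only [norm_div, norm_pow, norm_neg, norm_mul, Complex.norm_natCast, Complex.norm_ofNat]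
  rw [div_div]
  gcongr

theorem norm_sphBessel_le (n : ℕ) (z : ℂ) :
    ‖sphBessel n z‖ ≤ ‖z‖ ^ n / n ! * Real.exp (‖z‖ ^ 2 / 2) := by
  have hexp : HasSum (fun k : ℕ => (‖z‖ ^ 2 / 2) ^ k / k ! / n !)
      (Real.exp (‖z‖ ^ 2 / 2) / n !) := by
    rw [Real.exp_eq_exp_ℝ]
    exact (NormedSpace.expSeries_div_hasSum_exp _).div_const _
  rw [sphBessel, norm_mul, norm_pow, div_mul_eq_mul_div, mul_div_assoc]
  gcongr
  exact tsum_of_norm_bounded hexp fun k => norm_sphBessel_series_term_le n k z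

theorem norm_sphBessel_le_of_norm_le (n : ℕ) {z : ℂ} {R : ℝ} (hz : ‖z‖ ≤ R) :
    ‖sphBessel n z‖ ≤ R ^ n / n ! * Real.exp (R ^ 2 / 2) := by
  have hR : 0 ≤ R := (norm_nonneg z).trans hz
  exact (norm_sphBessel_le n z).trans (by gcongr)

theorem isBigO_eval_natCast_pow {A : Type*} [NormedRing A] (Q : Polynomial A) {r : ℝ}
    (hr : 1 < r) : (fun n : ℕ => Q.eval (n : A)) =O[atTop] fun n => r ^ n := by
  simp only [Polynomial.eval_eq_sum_range]
  exact IsBigO.fun_sum fun i _ =>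
    (isLittleO_pow_const_const_pow_of_one_lt i hr).isBigO.const_mul_left (Q.coeff i)

section ExponentialWeight

variable {E : Type*} [SeminormedAddCommGroup E] {w : ℕ → E} {r : ℝ}

theorem summable_norm_mul_pow_div_factorial (hw : w =O[atTop] fun n => r ^ n) (x : ℝ) :
    Summable fun n : ℕ => ‖w n‖ * (x ^ n / n !) := by
  have hprod : (fun n : ℕ => ‖w n‖ * (x ^ n / n !)) =O[atTop] fun n => (r * x) ^ n / n ! := by
    simpa only [mul_pow, mul_div_assoc] using hw.norm_left.mul (isBigO_refl _ atTop)
  exact summable_of_isBigO_nat (Real.summable_pow_div_factorial (r * x)) hprod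

theorem summable_norm_mul_pow_div_factorial_mul_sq (hw : w =O[atTop] fun n => r ^ n) (R c : ℝ) :
    Summable fun n : ℕ => ‖w n‖ * (R ^ n / n ! * c) ^ 2 := by
  refine Summable.of_nonneg_of_le (fun n => by positivity) (fun n => ?_)
    ((summable_norm_mul_pow_div_factorial hw (R ^ 2)).mul_right (c ^ 2))
  have hfact : (1 : ℝ) ≤ n ! := mod_cast n.factorial_pos
  calc ‖w n‖ * (R ^ n / n ! * c) ^ 2
      = ‖w n‖ * ((R ^ 2) ^ n / (n ! : ℝ) ^ 2) * c ^ 2 := by ring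
    _ ≤ ‖w n‖ * ((R ^ 2) ^ n / n !) * c ^ 2 := by
      gcongr
      exact le_self_pow₀ hfact two_ne_zero

theorem stmt_4_general (hw : w =O[atTop] fun n => r ^ n) :
    (∀ z : ℂ, Summable fun n : ℕ => ‖w n‖ * ‖sphBessel n z‖ ^ 2) ∧
    (∀ K : Set ℂ, Bornology.IsBounded K →
      TendstoUniformlyOn
        (fun N z => ∑ n ∈ Finset.range N, ‖w n‖ * ‖sphBessel n z‖ ^ 2)
        (fun z => ∑' n : ℕ, ‖w n‖ * ‖sphBessel n z‖ ^ 2)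
        atTop K) := by
  have majorant_summable (R : ℝ) :=
    summable_norm_mul_pow_div_factorial_mul_sq hw R (Real.exp (R ^ 2 / 2))
  have term_le {R : ℝ} (n : ℕ) {z : ℂ} (hz : ‖z‖ ≤ R) : ‖w n‖ * ‖sphBessel n z‖ ^ 2 ≤
      ‖w n‖ * (R ^ n / n ! * Real.exp (R ^ 2 / 2)) ^ 2 := by
    gcongr
    exact norm_sphBessel_le_of_norm_le n hz
  refine ⟨fun z => ?_, fun K hK => ?_⟩
  · exact (majorant_summable ‖z‖).of_nonneg_of_le (fun n => by positivity)
      fun n => term_le n le_rfl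
  · obtain ⟨R, hR⟩ := hK.exists_norm_le
    refine tendstoUniformlyOn_tsum_nat (majorant_summable R) fun n z hz => ?_
    rw [Real.norm_of_nonneg (by positivity)]
    exact term_le n (hR z hz)

end ExponentialWeight

/-- For every polynomial `Q` with complex coefficients, the series
`Σ_{n=0}^∞ |Q(n)| |j_n(z)|²` converges for every `z ∈ ℂ`, uniformly on every compact
subset of `ℂ`. -/
theorem stmt_4 (Q : Polynomial ℂ) :
    (∀ z : ℂ, Summable fun n : ℕ => ‖Q.eval (n : ℂ)‖ * ‖sphBessel n z‖ ^ 2) ∧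
    (∀ K : Set ℂ, IsCompact K →
      TendstoUniformlyOn
        (fun N z => ∑ n ∈ Finset.range N, ‖Q.eval (n : ℂ)‖ * ‖sphBessel n z‖ ^ 2)
        (fun z => ∑' n : ℕ, ‖Q.eval (n : ℂ)‖ * ‖sphBessel n z‖ ^ 2)
        Filter.atTop K) :=
  (stmt_4_general (isBigO_eval_natCast_pow Q one_lt_two)).imp_right
    fun hbounded K hK => hbounded K hK.isBounded
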